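/- arXiv:1806.10049 — 2 statements merged into one kernel-verified Lean document; each statement's English description precedes it below -/
import Mathlib

section
/- Let X be a real Banach space having property (D) and let I be an uncountable set. Then there is no bounded linear operator T : ℓ¹(I) → X that is bounded below, i.e., there exist no T and constant c > 0 with ‖T(u)‖ ≥ c‖u‖ for all u ∈ ℓ¹(I). In other words, X contains no subspace isomorphic to ℓ¹(I) for uncountable I (equivalently, no copy of ℓ₁(ω₁)). -/
open MeasureTheory

/-- The smallest σ-algebra on `E` making every functional in `Γ` measurable. -/
def sigmaGen (E : Type*) [NormedAddCommGroup E] [NormedSpace ℝ E]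
    (Γ : Set (E →L[ℝ] ℝ)) : MeasurableSpace E :=
  ⨆ φ ∈ Γ, MeasurableSpace.comap (fun x => φ x) Real.measurableSpace

/-- A set of continuous linear functionals is total if it separates the points of `E`. -/
def IsTotalSet (E : Type*) [NormedAddCommGroup E] [NormedSpace ℝ E]
    (Γ : Set (E →L[ℝ] ℝ)) : Prop :=
  ∀ x : E, x ≠ 0 → ∃ φ ∈ Γ, φ x ≠ 0

/-- Gulisashvili's property (D). -/
def HasPropertyD (E : Type*) [NormedAddCommGroup E] [NormedSpace ℝ E] : Prop :=
  ∀ Γ : Set (E →L[ℝ] ℝ), IsTotalSet E Γ → sigmaGen E Γ = sigmaGen E Set.univ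

/-!
Property (D) passes to closed subspaces: if `T : E → F` is a closed embedding and `Γ` is total
in `E*`, then the functionals on `F` whose restriction along `T` lies in `Γ ∪ {0}` are total, since
by Hahn–Banach those restricting to `0` separate outside points from the range of `T`. Pulling the
resulting equality of σ-algebras back along `T` gives the one for `Γ`.

So it suffices that `ℓ¹(I)` fails (D) for uncountable `I`. The coordinate functionals are total,
but each of them vanishes on all but countably many unit vectors, hence a set in the σ-algebra they
generate cannot separate `0` from uncountably many unit vectors. The functional `u ↦ ∑ i, u i`
does so, and is therefore not measurable for that σ-algebra.
-/

open Filter Set Topology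

section HahnBanach

variable {𝕜 E F : Type*} [NontriviallyNormedField 𝕜] [IsRCLikeNormedField 𝕜]
  [AddCommGroup E] [TopologicalSpace E] [Module 𝕜 E]
  [AddCommGroup F] [TopologicalSpace F] [Module 𝕜 F] [PolynormableSpace 𝕜 F]

theorem surjective_strongDual_comp_of_isEmbedding {T : E →L[𝕜] F} (hT : IsEmbedding T) :
    Function.Surjective fun φ : StrongDual 𝕜 F => φ.comp T := by
  intro g
  let e : E ≃ₗ[𝕜] T.range := LinearEquiv.ofInjective T.toLinearMap hT.injective
  have hTe : T ∘ e.symm = Subtype.val := funext fun y => congrArg Subtype.val (e.apply_symm_apply y)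
  have he : Continuous e.symm := hT.continuous_iff.2 (hTe ▸ continuous_subtype_val)
  obtain ⟨φ, hφ⟩ := StrongDual.exists_extension T.range (g.comp ⟨e.symm.toLinearMap, he⟩)
  refine ⟨φ, ContinuousLinearMap.ext fun u => ?_⟩
  calc φ (T u) = g (e.symm (e u)) := hφ (e u)
    _ = g u := by rw [e.symm_apply_apply]

end HahnBanach

theorem exists_strongDual_le_ker_of_notMem {𝕜 E : Type*} [RCLike 𝕜] [NormedAddCommGroup E]
    [NormedSpace 𝕜 E] {p : Submodule 𝕜 E} (hp : IsClosed (p : Set E)) {x : E} (hx : x ∉ p) :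
    ∃ φ : StrongDual 𝕜 E, p ≤ φ.ker ∧ φ x ≠ 0 := by
  have hx' : p.mkQL x ≠ 0 := mt (Submodule.Quotient.mk_eq_zero p).1 hx
  obtain ⟨f, hf⟩ := SeparatingDual.exists_ne_zero (R := 𝕜) hx'
  refine ⟨f.comp p.mkQL, fun y hy => ?_, hf⟩
  have hy' : p.mkQL y = 0 := (Submodule.Quotient.mk_eq_zero p).2 hy
  simpa using congrArg f hy'

section SigmaGen

variable {E F : Type*} [NormedAddCommGroup E] [NormedSpace ℝ E]
  [NormedAddCommGroup F] [NormedSpace ℝ F]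

theorem sigmaGen_le_iff {Γ : Set (E →L[ℝ] ℝ)} {m : MeasurableSpace E} :
    sigmaGen E Γ ≤ m ↔ ∀ φ ∈ Γ, Measurable[m] φ := by
  simp only [sigmaGen, iSup_le_iff, measurable_iff_comap_le]

theorem measurable_sigmaGen {Γ : Set (E →L[ℝ] ℝ)} {φ : E →L[ℝ] ℝ} (hφ : φ ∈ Γ) :
    Measurable[sigmaGen E Γ] φ :=
  sigmaGen_le_iff.1 le_rfl φ hφ

theorem sigmaGen_insert_zero (Γ : Set (E →L[ℝ] ℝ)) :
    sigmaGen E (insert 0 Γ) = sigmaGen E Γ := by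
  simp only [sigmaGen, iSup_insert, zero_apply, MeasurableSpace.comap_const, bot_sup_eq]

theorem comap_sigmaGen (T : E →L[ℝ] F) (Γ : Set (F →L[ℝ] ℝ)) :
    (sigmaGen F Γ).comap T = sigmaGen E ((fun φ => φ.comp T) '' Γ) := by
  simp only [sigmaGen, MeasurableSpace.comap_iSup, MeasurableSpace.comap_comp, iSup_image]
  rfl

theorem IsTotalSet.preimage_comp {T : E →L[ℝ] F} (hT : IsClosedEmbedding T)
    {Γ : Set (E →L[ℝ] ℝ)} (hΓ : IsTotalSet E Γ) :
    IsTotalSet F ((fun φ => φ.comp T) ⁻¹' insert 0 Γ) := by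
  intro x hx
  by_cases hxT : x ∈ T.range
  · obtain ⟨u, rfl⟩ := hxT
    have hu : u ≠ 0 := by
      rintro rfl
      exact hx (map_zero T)
    obtain ⟨γ, hγ, hγu⟩ := hΓ u hu
    obtain ⟨φ, rfl⟩ := surjective_strongDual_comp_of_isEmbedding hT.isEmbedding γ
    exact ⟨φ, mem_insert_of_mem 0 hγ, hγu⟩
  · obtain ⟨φ, hφT, hφx⟩ := exists_strongDual_le_ker_of_notMem (p := T.range) hT.isClosed_range hxT
    have hφ : φ.comp T = 0 := ContinuousLinearMap.ext fun u => hφT ⟨u, rfl⟩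
    exact ⟨φ, Or.inl hφ, hφx⟩

theorem HasPropertyD.of_isClosedEmbedding (hF : HasPropertyD F) {T : E →L[ℝ] F}
    (hT : IsClosedEmbedding T) : HasPropertyD E := by
  intro Γ hΓ
  have hsurj := surjective_strongDual_comp_of_isEmbedding hT.isEmbedding
  calc sigmaGen E Γ = sigmaGen E (insert 0 Γ) := (sigmaGen_insert_zero Γ).symm
    _ = (sigmaGen F ((fun φ => φ.comp T) ⁻¹' insert 0 Γ)).comap T := by
      rw [comap_sigmaGen, image_preimage_eq _ hsurj]
    _ = (sigmaGen F univ).comap T := by rw [hF _ (hΓ.preimage_comp hT)]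
    _ = sigmaGen E univ := by rw [comap_sigmaGen, image_univ_of_surjective hsurj]

theorem eventually_eq_of_measurable_sigmaGen {β : Type*} [MeasurableSpace β]
    [MeasurableSingletonClass β] {l : Filter E} [CountableInterFilter l]
    {Γ : Set (E →L[ℝ] ℝ)} (hΓ : ∀ φ ∈ Γ, ∀ᶠ x in l, φ x = 0)
    {f : E → β} (hf : Measurable[sigmaGen E Γ] f) : ∀ᶠ x in l, f x = f 0 := by
  -- Adjoining the point `0` to `l` forces the eventually constant value of `f` to be `f 0`.
  let l₀ : Filter E := l ⊔ 𝓟 {0}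
  have hle : sigmaGen E Γ ≤ eventuallyMeasurableSpace ⊥ l₀ := by
    refine sigmaGen_le_iff.2 fun φ hφ => ?_
    have hφ₀ : φ =ᶠ[l₀] fun _ => 0 := eventually_sup.2 ⟨hΓ φ hφ, by simp⟩
    exact (@measurable_const _ _ _ ⊥ _).eventuallyMeasurable_of_eventuallyEq hφ₀
  obtain ⟨t, ht, hft⟩ := hle _ (hf (measurableSet_singleton (f 0)))
  obtain ⟨hl, h0⟩ := eventually_sup.1 hft.mem_iff
  have h0t : 0 ∈ t := by simpa using h0
  have htu : t = univ :=
    (MeasurableSpace.measurableSet_bot_iff.1 ht).resolve_left (Set.nonempty_of_mem h0t).ne_empty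
  simpa [htu] using hl

theorem countable_setOf_ne_of_measurable_sigmaGen {β I : Type*} [MeasurableSpace β]
    [MeasurableSingletonClass β] {Γ : Set (E →L[ℝ] ℝ)} {e : I → E}
    (hΓ : ∀ φ ∈ Γ, {i | φ (e i) ≠ 0}.Countable)
    {f : E → β} (hf : Measurable[sigmaGen E Γ] f) : {i | f (e i) ≠ f 0}.Countable :=
  have : CountableInterFilter (cocountable : Filter I) :=
    cardinalInterFilter_aleph_one_iff.1 inferInstance
  mem_cocountable.1 <| eventually_map.1 <|
    eventually_eq_of_measurable_sigmaGen (l := map e cocountable)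
      (fun φ hφ => mem_cocountable.2 (hΓ φ hφ)) hf

theorem HasPropertyD.countable_setOf_ne_zero {I : Type*} (hE : HasPropertyD E)
    {Γ : Set (E →L[ℝ] ℝ)} (htot : IsTotalSet E Γ) {e : I → E}
    (hΓ : ∀ φ ∈ Γ, {i | φ (e i) ≠ 0}.Countable) (ψ : E →L[ℝ] ℝ) :
    {i | ψ (e i) ≠ 0}.Countable := by
  have hψ : Measurable[sigmaGen E Γ] ψ := by
    rw [hE Γ htot]
    exact measurable_sigmaGen (mem_univ ψ)
  simpa only [map_zero] using countable_setOf_ne_of_measurable_sigmaGen hΓ hψ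

end SigmaGen

theorem isTotalSet_range_evalCLM (I : Type*) (p : ENNReal) [Fact (1 ≤ p)] :
    IsTotalSet (lp (fun _ : I => ℝ) p) (range (lp.evalCLM ℝ (fun _ : I => ℝ) p)) := by
  intro u hu
  by_contra! h
  exact hu (lp.ext (funext fun i => h _ (mem_range_self i)))

theorem not_hasPropertyD_lp_one (I : Type*) [Uncountable I] :
    ¬ HasPropertyD (lp (fun _ : I => ℝ) 1) := by
  classical
  intro hD
  have hcoord : ∀ φ ∈ range (lp.evalCLM ℝ (fun _ : I => ℝ) 1),
      {i | φ (lp.single 1 i 1) ≠ 0}.Countable := by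
    rintro _ ⟨j, rfl⟩
    refine (countable_singleton j).mono fun i hi => ?_
    by_contra hij
    exact hi (lp.single_apply_ne (E := fun _ : I => ℝ) 1 i 1 (Ne.symm hij))
  have hsum := hD.countable_setOf_ne_zero (isTotalSet_range_evalCLM I 1) hcoord (lp.tsumCLM ℝ I ℝ)
  simp [countable_univ_iff] at hsum

theorem no_ell1_uncountable_of_propertyD_general
    {X : Type*} [NormedAddCommGroup X] [NormedSpace ℝ X]
    (hX : HasPropertyD X)
    {I : Type*} [Uncountable I]
    (T : lp (fun _ : I => ℝ) 1 →L[ℝ] X) (c : ℝ) (hc : 0 < c) :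
    ¬ (∀ u : lp (fun _ : I => ℝ) 1, c * ‖u‖ ≤ ‖T u‖) := by
  intro hT
  obtain ⟨K, hK⟩ := antilipschitzWith_iff_exists_mul_le_norm.2 ⟨c, hc, hT⟩
  exact not_hasPropertyD_lp_one I
    (hX.of_isClosedEmbedding (hK.isClosedEmbedding T.uniformContinuous))

/-- A Banach space with property (D) contains no subspace isomorphic to `ℓ¹(I)` for
an uncountable index set `I`: there is no bounded linear operator `T : ℓ¹(I) → X`
which is bounded below. -/
theorem no_ell1_uncountable_of_propertyD
    {X : Type*} [NormedAddCommGroup X] [NormedSpace ℝ X] [CompleteSpace X]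
    (hX : HasPropertyD X)
    {I : Type*} [Uncountable I]
    (T : lp (fun _ : I => ℝ) 1 →L[ℝ] X) (c : ℝ) (hc : 0 < c) :
    ¬ (∀ u : lp (fun _ : I => ℝ) 1, c * ‖u‖ ≤ ‖T u‖) :=
  no_ell1_uncountable_of_propertyD_general hX T c hc
end

section
/- Let (Ω,Σ,ν) be a complete probability space, X a real Banach space, Γ ⊆ X* a total linear subspace, and f : Ω → X a Γ-integrable function such that the vector measure I_f : Σ → X, I_f(A) = ∫_A f dν, is countably additive. If there is a partition Ω = ⋃_{n∈ℕ} A_n into countably many pairwise disjoint measurable sets such that each restriction f|_{A_n} is Pettis integrable (with respect to ν restricted to A_n), then f is Pettis integrable. -/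
open MeasureTheory Filter Topology

/-- `f` is Pettis integrable with respect to `ν`: every `x* ∘ f` is integrable and
each set `A` admits a Pettis integral `∫_A f dν ∈ X`. -/
def PettisIntegrable {Ω X : Type*} [MeasurableSpace Ω]
    [NormedAddCommGroup X] [NormedSpace ℝ X]
    (ν : Measure Ω) (f : Ω → X) : Prop :=
  (∀ φ : X →L[ℝ] ℝ, Integrable (fun ω => φ (f ω)) ν) ∧
  ∀ A : Set Ω, MeasurableSet A → ∃ m : X, ∀ φ : X →L[ℝ] ℝ, φ m = ∫ ω in A, φ (f ω) ∂ν

/-!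
The scalar functions `φ ∘ f` with `φ ∉ Γ` are controlled only on the pieces `A n`, where totality
of `Γ` identifies `m (B ∩ A n)` with the Pettis integral over `B ∩ A n`. Countable additivity of
`m` then makes `∑ n, ∫ ω in B ∩ A n, φ (f ω) ∂ν` converge to `φ (m B)` for every measurable `B`.
Taking for `B` the sets where `φ ∘ f` is nonnegative and negative gives absolute convergence,
hence integrability of `φ ∘ f`, and the limit `φ (m B)` must be its integral over `B`.
-/

section ScalarIntegrability

variable {Ω : Type*} [MeasurableSpace Ω] {μ : Measure Ω} {A : ℕ → Set Ω} {g : Ω → ℝ}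

theorem integrableOn_iUnion_of_nonneg_of_tendsto_sum {l : ℝ}
    (hg : ∀ n, IntegrableOn g (A n) μ) (hnonneg : 0 ≤ᵐ[μ.restrict (⋃ n, A n)] g)
    (hlim : Tendsto (fun N => ∑ n ∈ Finset.range N, ∫ ω in A n, g ω ∂μ) atTop (𝓝 l)) :
    IntegrableOn g (⋃ n, A n) μ := by
  have hnorm : ∀ n, ∫ ω in A n, ‖g ω‖ ∂μ = ∫ ω in A n, g ω ∂μ := fun n =>
    integral_congr_ae <| (ae_restrict_of_ae_restrict_of_subset (Set.subset_iUnion A n) hnonneg).mono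
      fun _ hω => Real.norm_of_nonneg hω
  have hsum : HasSum (fun n => ∫ ω in A n, ‖g ω‖ ∂μ) l := by
    rw [hasSum_iff_tendsto_nat_of_nonneg fun n => integral_nonneg fun ω => norm_nonneg (g ω)]
    simpa only [hnorm] using hlim
  exact integrableOn_iUnion_of_summable_integral_norm hg hsum.summable

theorem integrableOn_iUnion_of_forall_exists_tendsto_sum
    (hg : ∀ n, IntegrableOn g (A n) μ)
    (hlim : ∀ B, MeasurableSet B → ∃ l, Tendsto
      (fun N => ∑ n ∈ Finset.range N, ∫ ω in B ∩ A n, g ω ∂μ) atTop (𝓝 l)) :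
    IntegrableOn g (⋃ n, A n) μ := by
  have hmeas : AEMeasurable g (μ.restrict (⋃ n, A n)) :=
    aemeasurable_iUnion_iff.mpr fun n => (hg n).aemeasurable
  obtain ⟨P, -, hP, hPae⟩ :=
    (nullMeasurableSet_le aemeasurable_const hmeas).exists_measurable_superset_ae_eq
  have hsign : ∀ᵐ ω ∂μ.restrict (⋃ n, A n), ω ∈ P ↔ 0 ≤ g ω := hPae.mem_iff
  have hpos : IntegrableOn g (P ∩ ⋃ n, A n) μ := by
    obtain ⟨l, hl⟩ := hlim P hP
    rw [Set.inter_iUnion]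
    refine integrableOn_iUnion_of_nonneg_of_tendsto_sum
      (fun n => (hg n).mono_set Set.inter_subset_right) ?_ hl
    rw [← Set.inter_iUnion, ← Measure.restrict_restrict hP]
    exact (ae_restrict_iff' hP).mpr (hsign.mono fun ω hω => hω.mp)
  have hneg : IntegrableOn (-g) (Pᶜ ∩ ⋃ n, A n) μ := by
    obtain ⟨l, hl⟩ := hlim Pᶜ hP.compl
    rw [Set.inter_iUnion]
    refine integrableOn_iUnion_of_nonneg_of_tendsto_sum (l := -l)
      (fun n => ((hg n).mono_set Set.inter_subset_right).neg) ?_ ?_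
    · rw [← Set.inter_iUnion, ← Measure.restrict_restrict hP.compl]
      refine (ae_restrict_iff' hP.compl).mpr (hsign.mono fun ω hω hωP => ?_)
      exact neg_nonneg.mpr (not_le.mp (mt hω.mpr hωP)).le
    · simpa only [Pi.neg_apply, integral_neg, Finset.sum_neg_distrib] using hl.neg
  have hunion := hpos.union (integrable_neg_iff.mp hneg)
  rwa [← Set.union_inter_distrib_right, Set.union_compl_self, Set.univ_inter] at hunion

end ScalarIntegrability

section CountableAdditivity

variable {Ω X : Type*} [MeasurableSpace Ω] [AddCommMonoid X] [TopologicalSpace X]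

/-- Countable additivity of a set function on the measurable sets; unlike for
`VectorMeasure`, its values on non-measurable sets are arbitrary. -/
def IsCountablyAdditive (m : Set Ω → X) : Prop :=
  ∀ A : ℕ → Set Ω, (∀ n, MeasurableSet (A n)) → Pairwise (Function.onFun Disjoint A) →
    Tendsto (fun N => ∑ n ∈ Finset.range N, m (A n)) atTop (𝓝 (m (⋃ n, A n)))

theorem IsCountablyAdditive.tendsto_sum_inter
    {m : Set Ω → X} (hm : IsCountablyAdditive m) {A : ℕ → Set Ω}
    (hAmeas : ∀ n, MeasurableSet (A n)) (hAdisj : Pairwise (Function.onFun Disjoint A))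
    (hAcover : ⋃ n, A n = Set.univ) {B : Set Ω} (hB : MeasurableSet B) :
    Tendsto (fun N => ∑ n ∈ Finset.range N, m (B ∩ A n)) atTop (𝓝 (m B)) := by
  have hlim := hm (fun n => B ∩ A n) (fun n => hB.inter (hAmeas n))
    (hAdisj.mono fun _ _ hij => hij.mono Set.inter_subset_right Set.inter_subset_right)
  rwa [← Set.inter_iUnion, hAcover, Set.inter_univ] at hlim

end CountableAdditivity

section PettisIntegrability

variable {Ω X : Type*} [MeasurableSpace Ω] [NormedAddCommGroup X] [NormedSpace ℝ X]
  {ν : Measure Ω} {Γ : Set (X →L[ℝ] ℝ)} {f : Ω → X} {A : ℕ → Set Ω}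

theorem PettisIntegrable.apply_eq_setIntegral_of_forall_mem
    (hf : PettisIntegrable ν f) (htotal : ∀ x : X, x ≠ 0 → ∃ φ ∈ Γ, φ x ≠ 0)
    {B : Set Ω} (hB : MeasurableSet B) {x : X}
    (hx : ∀ φ ∈ Γ, φ x = ∫ ω in B, φ (f ω) ∂ν) (φ : X →L[ℝ] ℝ) :
    φ x = ∫ ω in B, φ (f ω) ∂ν := by
  obtain ⟨y, hy⟩ := hf.2 B hB
  have hxy : x = y := by
    by_contra hne
    obtain ⟨ψ, hψ, hψne⟩ := htotal (x - y) (sub_ne_zero.mpr hne)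
    exact hψne (by rw [map_sub, hx ψ hψ, hy ψ, sub_self])
  rw [hxy, hy φ]

theorem pettisIntegrable_of_forall_exists_tendsto_sum
    (hAmeas : ∀ n, MeasurableSet (A n)) (hAdisj : Pairwise (Function.onFun Disjoint A))
    (hAcover : ⋃ n, A n = Set.univ)
    (hint : ∀ (φ : X →L[ℝ] ℝ) n, IntegrableOn (fun ω => φ (f ω)) (A n) ν)
    (hlim : ∀ B, MeasurableSet B → ∃ x : X, ∀ φ : X →L[ℝ] ℝ, Tendsto
      (fun N => ∑ n ∈ Finset.range N, ∫ ω in B ∩ A n, φ (f ω) ∂ν) atTop (𝓝 (φ x))) :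
    PettisIntegrable ν f := by
  have hf : ∀ φ : X →L[ℝ] ℝ, Integrable (fun ω => φ (f ω)) ν := fun φ => by
    rw [← integrableOn_univ, ← hAcover]
    exact integrableOn_iUnion_of_forall_exists_tendsto_sum (hint φ)
      fun B hB => (hlim B hB).imp' φ fun _ hx => hx φ
  refine ⟨hf, fun B hB => (hlim B hB).imp fun x hx φ => ?_⟩
  have hsum := hasSum_integral_iUnion (fun n => hB.inter (hAmeas n))
    (hAdisj.mono fun _ _ hij => hij.mono Set.inter_subset_right Set.inter_subset_right)
    (hf φ).integrableOn
  rw [← Set.inter_iUnion, hAcover, Set.inter_univ] at hsum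
  exact tendsto_nhds_unique (hx φ) hsum.tendsto_sum_nat

theorem pettis_of_partition_general {m : Set Ω → X}
    (htotal : ∀ x : X, x ≠ 0 → ∃ φ ∈ Γ, φ x ≠ 0)
    (hm : ∀ n B, MeasurableSet B → ∀ φ ∈ Γ, φ (m (B ∩ A n)) = ∫ ω in B ∩ A n, φ (f ω) ∂ν)
    (hca : IsCountablyAdditive m)
    (hAmeas : ∀ n, MeasurableSet (A n)) (hAdisj : Pairwise (Function.onFun Disjoint A))
    (hAcover : ⋃ n, A n = Set.univ)
    (hPettis : ∀ n, PettisIntegrable (ν.restrict (A n)) f) :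
    PettisIntegrable ν f := by
  have hpiece : ∀ n B, MeasurableSet B → ∀ φ : X →L[ℝ] ℝ,
      φ (m (B ∩ A n)) = ∫ ω in B ∩ A n, φ (f ω) ∂ν := fun n B hB => by
    rw [← Measure.restrict_restrict hB]
    refine (hPettis n).apply_eq_setIntegral_of_forall_mem htotal hB fun φ hφ => ?_
    rw [Measure.restrict_restrict hB, hm n B hB φ hφ]
  refine pettisIntegrable_of_forall_exists_tendsto_sum hAmeas hAdisj hAcover
    (fun φ n => (hPettis n).1 φ) fun B hB => ⟨m B, fun φ => ?_⟩
  simp only [← hpiece _ B hB, ← map_sum]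
  exact (φ.continuous.tendsto _).comp (hca.tendsto_sum_inter hAmeas hAdisj hAcover hB)

end PettisIntegrability

/-- If `f : Ω → X` is `Γ`-integrable with countably additive indefinite integral `m`,
and there is a countable measurable partition of `Ω` on each piece of which `f` is
Pettis integrable, then `f` is Pettis integrable. -/
theorem pettis_of_partition
    {Ω X : Type*} [MeasurableSpace Ω] [NormedAddCommGroup X] [NormedSpace ℝ X]
    [CompleteSpace X]
    (ν : Measure Ω) [IsProbabilityMeasure ν] [ν.IsComplete]
    (Γ : Submodule ℝ (X →L[ℝ] ℝ))
    (htotal : ∀ x : X, x ≠ 0 → ∃ φ ∈ Γ, φ x ≠ 0)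
    (f : Ω → X)
    (hscal : ∀ φ ∈ Γ, Integrable (fun ω => φ (f ω)) ν)
    (m : Set Ω → X)
    (hm : ∀ A : Set Ω, MeasurableSet A → ∀ φ ∈ Γ, φ (m A) = ∫ ω in A, φ (f ω) ∂ν)
    (hca : ∀ A : ℕ → Set Ω, (∀ n, MeasurableSet (A n)) →
      Pairwise (Function.onFun Disjoint A) →
      Tendsto (fun N => ∑ n ∈ Finset.range N, m (A n)) atTop (𝓝 (m (⋃ n, A n))))
    (A : ℕ → Set Ω) (hAmeas : ∀ n, MeasurableSet (A n))
    (hAdisj : Pairwise (Function.onFun Disjoint A))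
    (hAcover : (⋃ n, A n) = Set.univ)
    (hPettis : ∀ n, PettisIntegrable (ν.restrict (A n)) f) :
    PettisIntegrable ν f :=
  pettis_of_partition_general htotal (fun n _ hB => hm _ (hB.inter (hAmeas n))) hca
    hAmeas hAdisj hAcover hPettis
end
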